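/- Let T ⊂ ℂ be the tripod: the union of the three segments joining 0 to the three cube roots of unity, i.e. T = {t•ζ : t ∈ [0,1], ζ³ = 1}. For every natural number m, there is no continuous injective map from T × D^m into EuclideanSpace ℝ (Fin (m+1)), where D^m is the closed unit ball in EuclideanSpace ℝ (Fin m). -/

import Mathlib

/-- The tripod: the union of the three segments in `ℂ` joining `0` to the three cube
roots of unity. -/
def tripod : Set ℂ := {z : ℂ | ∃ t ∈ Set.Icc (0 : ℝ) 1, ∃ ζ : ℂ, ζ ^ 3 = 1 ∧ z = t • ζ}

/-!
The open set `(-1, 1) × ball 0 1` embeds into `T × Dᵐ` by bending the first coordinate along two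
legs of the tripod, so invariance of domain makes its image open. This is absurd, because the
points `(t • c, 0)` on the third leg tend to `(0, 0)`, which lies in the image, while none of them
with `t > 0` does.

Invariance of domain is reduced to Brouwer's fixed point theorem. Let `f` be a continuous injection
of the closed unit ball with a continuous left inverse `G`, and suppose that a point `c` close to
`f 0` is missed. Then `range f` can be pushed radially out of a small ball around `c` containing
`f 0`, the only zero of `G` on `range f`, and a small perturbation `P` of `G` has no zero on the
pushed set. But `x ↦ x - P (push (f x))` maps the unit ball to itself, and `P` vanishes at the
pushed image of a fixed point.

Brouwer's theorem follows from the Milnor–Rogers volume argument. If `g` is `K`-Lipschitz and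
vanishes off `U`, then `x ↦ x + s⁻¹ • g x` permutes `U` for `s > K`, so that
`∫ x in U, det (s + Dg x) = sⁿ μ U`. Both sides are polynomials in `s`, hence they agree at `s = 1`.
If `id + g` were a retraction onto the sphere, the left side would vanish there.
-/

open Set Metric MeasureTheory Module
open scoped Topology NNReal Polynomial

section Volume

lemma integral_eval_eq_of_infinite {α : Type*} [MeasurableSpace α] {μ : Measure α} {p : α → ℝ[X]}
    {q : ℝ[X]} {n : ℕ} (hp : ∀ x, (p x).natDegree ≤ n) (hq : q.natDegree ≤ n) {s : Set ℝ}
    (hs : s.Infinite) (hint : ∀ t ∈ s, Integrable (fun x ↦ (p x).eval t) μ)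
    (h : ∀ t ∈ s, ∫ x, (p x).eval t ∂μ = q.eval t) (t : ℝ) :
    ∫ x, (p x).eval t ∂μ = q.eval t := by
  obtain ⟨u, hus, hu⟩ := hs.exists_subset_card_eq (n + 1)
  have eval_eq {r : ℝ[X]} (hr : r.natDegree ≤ n) :
      r.eval t = ∑ i ∈ u, r.eval i * (Lagrange.basis u id i).eval t := by
    have hdeg : r.degree < u.card := by
      rw [hu]
      exact r.degree_le_natDegree.trans_lt (mod_cast Nat.lt_succ_of_le hr)
    conv_lhs => rw [Lagrange.eq_interpolate Function.injective_id.injOn hdeg]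
    simp [Lagrange.interpolate_apply, Polynomial.eval_finsetSum]
  calc ∫ x, (p x).eval t ∂μ
      = ∫ x, ∑ i ∈ u, (p x).eval i * (Lagrange.basis u id i).eval t ∂μ := by
        simp only [eval_eq (hp _)]
    _ = ∑ i ∈ u, (∫ x, (p x).eval i ∂μ) * (Lagrange.basis u id i).eval t := by
        rw [integral_finsetSum _ fun i hi ↦ (hint i (hus hi)).mul_const _]
        simp only [integral_mul_const]
    _ = q.eval t := by
        rw [eval_eq hq]
        exact Finset.sum_congr rfl fun i hi ↦ by rw [h i (hus hi)]

variable {E : Type*} [NormedAddCommGroup E] [NormedSpace ℝ E]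

section Perturbation

variable [CompleteSpace E] {U : Set E} {g : E → E} {K : ℝ≥0}

lemma bijective_add_of_lipschitzWith (hg : LipschitzWith K g) (hK : K < 1) :
    Function.Bijective fun x ↦ x + g x := by
  have happrox : ApproximatesLinearOn (fun x ↦ x + g x)
      (ContinuousLinearEquiv.refl ℝ E : E →L[ℝ] E) univ K := by
    refine LipschitzOnWith.approximatesLinearOn ?_
    convert hg.lipschitzOnWith using 1
    ext x
    simp
  have hc : Subsingleton E ∨ K < ‖((ContinuousLinearEquiv.refl ℝ E).symm : E →L[ℝ] E)‖₊⁻¹ := by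
    refine (subsingleton_or_nontrivial E).imp_right fun (_ : Nontrivial E) ↦ ?_
    have hid : ‖((ContinuousLinearEquiv.refl ℝ E).symm : E →L[ℝ] E)‖₊ = 1 :=
      ContinuousLinearMap.nnnorm_id
    rwa [hid, inv_one]
  exact (happrox.toHomeomorph _ hc).bijective

lemma image_add_eq_self_of_eqOn_compl (hg : LipschitzWith K g) (hK : K < 1) (h0 : EqOn g 0 Uᶜ) :
    (fun x ↦ x + g x) '' U = U := by
  have hbij := bijective_add_of_lipschitzWith hg hK
  have hcompl : (fun x ↦ x + g x) '' Uᶜ = Uᶜ := by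
    conv_rhs => rw [← image_id Uᶜ]
    exact image_congr fun x hx ↦ by simp [h0 hx]
  rwa [image_compl_eq hbij, compl_inj_iff] at hcompl

end Perturbation

variable [FiniteDimensional ℝ E]

lemma det_one_add_pos_of_norm_lt_one {A : E →L[ℝ] E} (hA : ‖A‖ < 1) : 0 < (1 + A).det := by
  have := FiniteDimensional.complete ℝ E
  have hcont : Continuous fun s : ℝ ↦ (1 + s • A).det :=
    ContinuousLinearMap.continuous_det.comp (by fun_prop)
  by_contra! hneg
  obtain ⟨s, ⟨hs0, hs1⟩, hs⟩ : (0 : ℝ) ∈ (fun s : ℝ ↦ (1 + s • A).det) '' Icc 0 1 :=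
    intermediate_value_Icc' zero_le_one hcont.continuousOn
      ⟨by simpa using hneg, by simp [ContinuousLinearMap.det]⟩
  have hnorm : ‖-(s • A)‖ < 1 := by
    rw [norm_neg, norm_smul, Real.norm_of_nonneg hs0]
    exact (mul_le_of_le_one_left (norm_nonneg _) hs1).trans_lt hA
  have hunit : IsUnit (1 + s • A) := by simpa using isUnit_one_sub_of_norm_lt_one hnorm
  have hdet : IsUnit (1 + s • A).det :=
    LinearMap.isUnit_det _ (hunit.map ContinuousLinearMap.toLinearMapRingHom)
  exact hdet.ne_zero hs

lemma eval_charpoly_neg (A : E →L[ℝ] E) {s : ℝ} (hs : s ≠ 0) :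
    (-(A : E →ₗ[ℝ] E)).charpoly.eval s = s ^ finrank ℝ E * (1 + s⁻¹ • A).det := by
  rw [LinearMap.eval_charpoly, ContinuousLinearMap.det, ← LinearMap.det_smul]
  congr 1
  ext x
  simp [hs]

lemma lipschitzWith_indicator_of_frontier {F : Type*} [SeminormedAddCommGroup F] {s : Set E}
    (hs : IsClosed s) {g : E → F} {K : ℝ≥0} (hg : LipschitzOnWith K g s)
    (h0 : ∀ x ∈ frontier s, g x = 0) : LipschitzWith K (s.indicator g) := by
  have hcross {x y : E} (hx : x ∈ s) (hy : y ∉ s) :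
      dist (s.indicator g x) (s.indicator g y) ≤ K * dist x y := by
    obtain ⟨z, hz, hxz⟩ :=
      exists_mem_frontier_infDist_compl_eq_dist hx (ne_univ_iff_exists_notMem s |>.2 ⟨y, hy⟩)
    calc dist (s.indicator g x) (s.indicator g y)
        = dist (g x) (g z) := by rw [indicator_of_mem hx, indicator_of_notMem hy, h0 z hz]
      _ ≤ K * dist x z := hg.dist_le_mul x hx z (hs.frontier_subset hz)
      _ ≤ K * dist x y := by
        gcongr
        exact hxz ▸ infDist_le_dist_of_mem hy
  refine LipschitzWith.of_dist_le_mul fun x y ↦ ?_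
  by_cases hx : x ∈ s <;> by_cases hy : y ∈ s
  · simpa only [indicator_of_mem, hx, hy] using hg.dist_le_mul x hx y hy
  · exact hcross hx hy
  · rw [dist_comm, dist_comm x]
    exact hcross hy hx
  · simp only [indicator_of_notMem hx, indicator_of_notMem hy, dist_self]
    positivity

variable [MeasurableSpace E] [BorelSpace E] {μ : Measure E} [μ.IsAddHaarMeasure]
  {U : Set E} {g : E → E} {K : ℝ≥0}

lemma integral_det_one_add_fderiv_of_lt_one (hU : IsOpen U) (hμU : μ U ≠ ⊤)
    (hg : LipschitzWith K g) (hK : K < 1) (h0 : EqOn g 0 Uᶜ) (hd : DifferentiableOn ℝ g U) :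
    IntegrableOn (fun x ↦ (1 + fderiv ℝ g x).det) U μ ∧
      ∫ x in U, (1 + fderiv ℝ g x).det ∂μ = μ.real U := by
  have := FiniteDimensional.complete ℝ E
  have hinj : InjOn (fun x ↦ x + g x) U := (bijective_add_of_lipschitzWith hg hK).1.injOn
  have himage := image_add_eq_self_of_eqOn_compl hg hK h0
  have hderiv : ∀ x ∈ U, HasFDerivWithinAt (fun x ↦ x + g x) (1 + fderiv ℝ g x) U x :=
    fun x hx ↦ ((hasFDerivAt_id x).add
      (hd.differentiableAt (hU.mem_nhds hx)).hasFDerivAt).hasFDerivWithinAt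
  have habs (x : E) : |(1 + fderiv ℝ g x).det| • (1 : ℝ) = (1 + fderiv ℝ g x).det := by
    rw [smul_eq_mul, mul_one, abs_of_pos]
    exact det_one_add_pos_of_norm_lt_one ((norm_fderiv_le_of_lipschitz ℝ hg).trans_lt hK)
  have hint := integrableOn_image_iff_integrableOn_abs_det_fderiv_smul μ hU.measurableSet hderiv
    hinj fun _ ↦ (1 : ℝ)
  have hval := integral_image_eq_integral_abs_det_fderiv_smul μ hU.measurableSet hderiv
    hinj fun _ ↦ (1 : ℝ)
  simp only [himage, habs] at hint hval
  exact ⟨hint.1 (integrableOn_const hμU), by simp [← hval]⟩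

lemma integral_det_one_add_fderiv (hU : IsOpen U) (hμU : μ U ≠ ⊤) (hg : LipschitzWith K g)
    (h0 : EqOn g 0 Uᶜ) (hd : DifferentiableOn ℝ g U) :
    ∫ x in U, (1 + fderiv ℝ g x).det ∂μ = μ.real U := by
  have hsmall : ∀ s ∈ Ioi (K : ℝ), IntegrableOn (fun x ↦ (1 + s⁻¹ • fderiv ℝ g x).det) U μ ∧
      ∫ x in U, (1 + s⁻¹ • fderiv ℝ g x).det ∂μ = μ.real U := by
    intro s hs
    have hs0 : 0 < s := K.2.trans_lt hs
    have hlip : LipschitzWith (‖s⁻¹‖₊ * K) (s⁻¹ • g) := (lipschitzWith_smul s⁻¹).comp hg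
    have hlt : ‖s⁻¹‖₊ * K < 1 := by
      rw [← NNReal.coe_lt_coe]
      simpa [abs_of_pos hs0, inv_mul_lt_iff₀ hs0] using hs
    simpa [fderiv_const_smul_field] using integral_det_one_add_fderiv_of_lt_one hU hμU hlip hlt
      (fun x hx ↦ by simp [h0 hx]) (hd.const_smul s⁻¹)
  have hpoly := integral_eval_eq_of_infinite (μ := μ.restrict U)
    (p := fun x ↦ (-(fderiv ℝ g x : E →ₗ[ℝ] E)).charpoly)
    (q := Polynomial.C (μ.real U) * Polynomial.X ^ finrank ℝ E)
    (fun x ↦ (LinearMap.charpoly_natDegree _).le) (Polynomial.natDegree_C_mul_X_pow_le _ _)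
    (Ioi_infinite (K : ℝ)) ?_ ?_ 1
  · simpa [eval_charpoly_neg _ one_ne_zero] using hpoly
  · intro s hs
    simp only [eval_charpoly_neg _ (K.2.trans_lt hs).ne']
    exact (hsmall s hs).1.const_mul _
  · intro s hs
    simp only [eval_charpoly_neg _ (K.2.trans_lt hs).ne']
    rw [integral_const_mul, (hsmall s hs).2, Polynomial.eval_C_mul, Polynomial.eval_X_pow,
      mul_comm]

lemma integral_det_fderiv_of_eqOn_sphere {R : ℝ} (hR : R ≠ 0) {r : E → E}
    (hr : ContDiffOn ℝ 1 r (closedBall 0 R)) (hid : EqOn r id (sphere 0 R)) :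
    ∫ x in ball 0 R, (fderiv ℝ r x).det ∂μ = μ.real (ball 0 R) := by
  set g : E → E := (closedBall 0 R).indicator fun x ↦ r x - x
  obtain ⟨K, hK⟩ := (hr.sub contDiffOn_id).exists_lipschitzOnWith one_ne_zero
    (convex_closedBall 0 R) (isCompact_closedBall 0 R)
  have hg : LipschitzWith K g := lipschitzWith_indicator_of_frontier isClosed_closedBall hK
    fun x hx ↦ sub_eq_zero.2 (hid (by rwa [frontier_closedBall _ hR] at hx))
  have h0 : EqOn g 0 (ball 0 R)ᶜ := by
    intro x hx
    by_cases hxR : x ∈ closedBall 0 R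
    · have hxs : x ∈ sphere 0 R := by
        rw [← closedBall_sdiff_ball]
        exact ⟨hxR, hx⟩
      simp [g, hid hxs]
    · exact indicator_of_notMem hxR _
  have hderiv : ∀ x ∈ ball (0 : E) R, HasFDerivAt g (fderiv ℝ r x - 1) x := by
    intro x hx
    have hrx := (hr.differentiableOn one_ne_zero).differentiableAt (closedBall_mem_nhds_of_mem hx)
    refine (hrx.hasFDerivAt.sub (hasFDerivAt_id x)).congr_of_eventuallyEq ?_
    filter_upwards [closedBall_mem_nhds_of_mem hx] with y hy
    simp [g, hy]
  rw [← integral_det_one_add_fderiv isOpen_ball measure_ball_lt_top.ne hg h0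
    fun x hx ↦ (hderiv x hx).differentiableAt.differentiableWithinAt]
  exact setIntegral_congr_fun measurableSet_ball fun x hx ↦ by
    simp only [(hderiv x hx).fderiv, add_sub_cancel]

end Volume

section Brouwer

variable {E : Type*} [NormedAddCommGroup E] [InnerProductSpace ℝ E] [FiniteDimensional ℝ E]

lemma det_fderiv_eq_zero_of_norm_eventually_eq {r : E → E} {x : E} (hd : DifferentiableAt ℝ r x)
    (hx : r x ≠ 0) (hr : ∀ᶠ y in 𝓝 x, ‖r y‖ = ‖r x‖) : (fderiv ℝ r x).det = 0 := by
  have hsq : HasFDerivAt (fun y ↦ ‖r y‖ ^ 2) (0 : E →L[ℝ] ℝ) x :=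
    (hasFDerivAt_const (‖r x‖ ^ 2) x).congr_of_eventuallyEq (hr.mono fun y hy ↦ by simp only [hy])
  have horth (v : E) : inner ℝ (r x) (fderiv ℝ r x v) = 0 := by
    simpa using congr($(hd.hasFDerivAt.norm_sq.unique hsq) v)
  by_contra hdet
  have hunit : IsUnit (fderiv ℝ r x : E →ₗ[ℝ] E) :=
    (LinearMap.isUnit_iff_isUnit_det _).2 (isUnit_iff_ne_zero.2 hdet)
  obtain ⟨v, hv⟩ := ((Module.End.isUnit_iff _).1 hunit).2 (r x)
  exact hx (inner_self_eq_zero.1 (hv ▸ horth v))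

lemma not_mapsTo_sphere_of_contDiffOn {R : ℝ} (hR : 0 < R) {r : E → E}
    (hr : ContDiffOn ℝ 1 r (closedBall 0 R)) (hid : EqOn r id (sphere 0 R)) :
    ¬ MapsTo r (closedBall 0 R) (sphere 0 R) := by
  intro hmaps
  borelize E
  have hnorm : ∀ x ∈ closedBall 0 R, ‖r x‖ = R := fun x hx ↦
    mem_sphere_zero_iff_norm.1 (hmaps hx)
  have hdet : ∀ x ∈ ball (0 : E) R, (fderiv ℝ r x).det = 0 := by
    intro x hx
    have hball : closedBall 0 R ∈ 𝓝 x := closedBall_mem_nhds_of_mem hx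
    have hxR := hnorm x (ball_subset_closedBall hx)
    refine det_fderiv_eq_zero_of_norm_eventually_eq
      ((hr.differentiableOn one_ne_zero).differentiableAt hball) (norm_pos_iff.1 (hxR ▸ hR)) ?_
    filter_upwards [hball] with y hy
    rw [hnorm y hy, hxR]
  have hint := integral_det_fderiv_of_eqOn_sphere (μ := Measure.addHaar) hR.ne' hr hid
  rw [setIntegral_congr_fun measurableSet_ball hdet, integral_zero] at hint
  exact (ENNReal.toReal_pos (measure_ball_pos _ _ hR).ne' measure_ball_lt_top.ne).ne hint

lemma exists_eq_zero_of_eqOn_sphere {R : ℝ} (hR : 0 < R) {F : E → E}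
    (hF : ContinuousOn F (closedBall 0 R)) (hid : EqOn F id (sphere 0 R)) :
    ∃ x ∈ closedBall 0 R, F x = 0 := by
  by_contra! hne
  set u : E → E := (closedBall 0 R).indicator fun x ↦ F x - x
  have hu : Continuous u := continuous_indicator
    (fun x hx ↦ sub_eq_zero.2 (hid (by rwa [frontier_closedBall _ hR.ne'] at hx)))
    (by rw [isClosed_closedBall.closure_eq]; exact hF.sub continuousOn_id)
  have hu_sphere : EqOn u 0 (sphere 0 R) := fun x hx ↦ by
    simp [u, sphere_subset_closedBall hx, hid hx]
  have hFu : ∀ x, x + u x ≠ 0 := by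
    intro x
    by_cases hx : x ∈ closedBall 0 R
    · simpa [u, hx] using hne x hx
    · simpa [u, hx] using ne_of_mem_of_not_mem (mem_closedBall_self hR.le) hx |>.symm
  obtain ⟨v, hv, hvu, hsupp⟩ := hu.exists_contDiff_approx 1 (ε := fun x ↦ ‖x + u x‖)
    (by fun_prop) fun x ↦ norm_pos_iff.2 (hFu x)
  have hG : ∀ x, x + v x ≠ 0 := fun x hx ↦ (hvu x).ne <| by
    rw [eq_neg_of_add_eq_zero_right hx, dist_eq_norm, ← neg_add', norm_neg]
  have hv_sphere : EqOn v 0 (sphere 0 R) := fun x hx ↦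
    Function.notMem_support.1 fun h ↦ hsupp h (hu_sphere hx)
  have hGd : ContDiff ℝ 1 fun x ↦ x + v x := contDiff_id.add hv
  have hr : ContDiff ℝ 1 fun x ↦ (R / ‖x + v x‖) • (x + v x) :=
    (contDiff_const.div (hGd.norm ℝ hG) fun x ↦ norm_ne_zero_iff.2 (hG x)).smul hGd
  refine not_mapsTo_sphere_of_contDiffOn hR hr.contDiffOn (fun x hx ↦ ?_) fun x _ ↦ ?_
  · simp [hv_sphere hx, mem_sphere_zero_iff_norm.1 hx, hR.ne']
  · rw [mem_sphere_zero_iff_norm, norm_smul, norm_div, norm_norm, Real.norm_of_nonneg hR.le,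
      div_mul_cancel₀ _ (norm_ne_zero_iff.2 (hG x))]

theorem exists_isFixedPt_closedBall (f : C(closedBall (0 : E) 1, closedBall (0 : E) 1)) :
    ∃ x, Function.IsFixedPt f x := by
  obtain ⟨g, hg⟩ := f.exists_restrict_eq isClosed_closedBall
  -- A zero has `‖x‖ ≤ 2 - ‖x‖`, so it lies in the unit ball, where the cutoff equals `1`.
  obtain ⟨x, hx2, hx⟩ : ∃ x ∈ closedBall (0 : E) 2, x - min 1 (2 - ‖x‖) • (g x : E) = 0 :=
    exists_eq_zero_of_eqOn_sphere two_pos (by fun_prop)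
      fun x hx ↦ by simp [mem_sphere_zero_iff_norm.1 hx]
  rw [mem_closedBall_zero_iff] at hx2
  have hx1 : ‖x‖ ≤ 1 := by
    have hmin : 0 ≤ min 1 (2 - ‖x‖) := le_min zero_le_one (sub_nonneg.2 hx2)
    have hle : ‖x‖ ≤ 2 - ‖x‖ := calc
      ‖x‖ = min 1 (2 - ‖x‖) * ‖(g x : E)‖ := by
        conv_lhs => rw [sub_eq_zero.1 hx, norm_smul, Real.norm_of_nonneg hmin]
      _ ≤ min 1 (2 - ‖x‖) := mul_le_of_le_one_right hmin (mem_closedBall_zero_iff.1 (g x).2)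
      _ ≤ 2 - ‖x‖ := min_le_right _ _
    linarith
  have hgx : (g x : E) = x := by
    rw [min_eq_left (by linarith), one_smul] at hx
    exact (sub_eq_zero.1 hx).symm
  refine ⟨⟨x, mem_closedBall_zero_iff.2 hx1⟩, Subtype.ext ?_⟩
  rw [← hg]
  exact hgx

end Brouwer

section InvarianceOfDomain

/-- The map pushing the punctured ball of radius `ε` around `c` radially onto its bounding sphere
and fixing every point outside that ball; `c` itself is sent to the junk value `c`. It is used to
move a compact set that avoids `c` off the open ball. -/
noncomputable def pushOut {E : Type*} [SeminormedAddCommGroup E] [Module ℝ E]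
    (c : E) (ε : ℝ) (y : E) : E :=
  c + max (ε / dist y c) 1 • (y - c)

section PushOut

variable {E : Type*} [NormedAddCommGroup E] [NormedSpace ℝ E] {c y : E} {ε : ℝ}

lemma pushOut_of_le_dist (h : ε ≤ dist y c) : pushOut c ε y = y := by
  simp [pushOut, max_eq_right (div_le_one_of_le₀ h dist_nonneg)]

lemma pushOut_mem_sphere (hyc : y ≠ c) (h : dist y c ≤ ε) :
    pushOut c ε y ∈ sphere c ε := by
  have hpos : 0 < dist y c := dist_pos.2 hyc
  rw [mem_sphere_iff_norm, pushOut, max_eq_left ((one_le_div hpos).2 h), add_sub_cancel_left,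
    norm_smul, norm_div, Real.norm_of_nonneg (hpos.le.trans h), Real.norm_of_nonneg dist_nonneg,
    dist_eq_norm, div_mul_cancel₀ _ (norm_sub_pos_iff.2 hyc).ne']

lemma continuousOn_pushOut : ContinuousOn (pushOut c ε) {c}ᶜ := by
  have hdist : ∀ y ∈ ({c}ᶜ : Set E), dist y c ≠ 0 := fun y hy ↦ dist_ne_zero.2 hy
  unfold pushOut
  fun_prop (disch := assumption)

end PushOut

lemma exists_continuous_dist_lt_and_ne_zero {E : Type*} [NormedAddCommGroup E] [NormedSpace ℝ E]
    [FiniteDimensional ℝ E] [MeasurableSpace E] [BorelSpace E] {μ : Measure E}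
    [μ.IsAddHaarMeasure] {G : E → E} (hG : Continuous G) {S N : Set E} (hS : IsCompact S)
    (hGS : ∀ y ∈ S, G y ≠ 0) (hN : μ N = 0) {ε : ℝ} (hε : 0 < ε) :
    ∃ P : E → E, Continuous P ∧ (∀ y, dist (P y) (G y) < ε) ∧ ∀ y ∈ S ∪ N, P y ≠ 0 := by
  obtain ⟨m, hm, hmS⟩ := hS.exists_forall_le' hG.norm.continuousOn (a := 0)
    fun y hy ↦ norm_pos_iff.2 (hGS y hy)
  obtain ⟨δ, hδ, hδm, hδε⟩ : ∃ δ > 0, δ ≤ m ∧ δ ≤ ε :=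
    ⟨min m ε, lt_min hm hε, min_le_left _ _, min_le_right _ _⟩
  obtain ⟨Q, hQ, hQG, -⟩ := hG.exists_contDiff_approx 1 (ε := fun _ ↦ δ / 2) continuous_const
    fun _ ↦ half_pos hδ
  have hnull : μ (Q '' N) = 0 := addHaar_image_eq_zero_of_differentiableOn_of_addHaar_eq_zero μ
    (hQ.differentiable one_ne_zero).differentiableOn hN
  obtain ⟨w, hw, hwQ⟩ : ∃ w ∈ ball (0 : E) (δ / 2), w ∉ Q '' N := by
    by_contra! hsub
    exact (measure_ball_pos μ _ (half_pos hδ)).ne' (measure_mono_null hsub hnull)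
  have hdist (y : E) : dist (Q y - w) (G y) < δ := calc
    dist (Q y - w) (G y) ≤ dist (Q y - w) (Q y) + dist (Q y) (G y) := dist_triangle _ _ _
    _ < δ / 2 + δ / 2 := add_lt_add (by simpa using hw) (hQG y)
    _ = δ := add_halves δ
  refine ⟨fun y ↦ Q y - w, hQ.continuous.sub continuous_const,
    fun y ↦ (hdist y).trans_le hδε, ?_⟩
  rintro y (hy | hy) h0
  · have hlt : ‖G y‖ < δ := by simpa only [h0, dist_zero_left] using hdist y
    exact (hmS y hy).not_gt (hlt.trans_le hδm)
  · exact hwQ ⟨y, hy, sub_eq_zero.1 h0⟩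

section EuclideanBall

variable {E : Type*} [NormedAddCommGroup E] [InnerProductSpace ℝ E] [FiniteDimensional ℝ E]

lemma exists_eq_zero_of_norm_sub_le_one {F : closedBall (0 : E) 1 → E} (hF : Continuous F)
    (h : ∀ x, ‖x - F x‖ ≤ 1) : ∃ x, F x = 0 := by
  obtain ⟨x, hx⟩ := exists_isFixedPt_closedBall
    ⟨fun x ↦ ⟨x - F x, mem_closedBall_zero_iff.2 (h x)⟩, by fun_prop⟩
  exact ⟨x, sub_eq_self.1 (congrArg Subtype.val hx)⟩

lemma mem_range_of_continuous_leftInverse {f : closedBall (0 : E) 1 → E} (hf : Continuous f)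
    {G : E → E} (hG : Continuous G) (hGf : ∀ x, G (f x) = x) {c : E} {ε : ℝ}
    (h0 : dist (f ⟨0, mem_closedBall_self zero_le_one⟩) c < ε)
    (hsmall : ∀ y ∈ closedBall c ε, ‖G y‖ ≤ 1 / 3) : c ∈ range f := by
  borelize E
  by_contra hc
  have hε : 0 < ε := dist_nonneg.trans_lt h0
  have hfc (x) : f x ≠ c := fun h ↦ hc ⟨x, h⟩
  have := isCompact_iff_compactSpace.1 (isCompact_closedBall (0 : E) 1)
  have hS : IsCompact (range f \ ball c ε) := (isCompact_range hf).diff isOpen_ball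
  have hGS : ∀ y ∈ range f \ ball c ε, G y ≠ 0 := by
    rintro _ ⟨⟨x, rfl⟩, hx⟩ hGx
    have hx0 : x = ⟨0, mem_closedBall_self zero_le_one⟩ := Subtype.ext (hGf x ▸ hGx)
    exact hx (hx0 ▸ h0)
  obtain ⟨P, hP, hPG, hP0⟩ := exists_continuous_dist_lt_and_ne_zero hG hS hGS
    (Measure.addHaar_sphere_of_ne_zero Measure.addHaar c hε.ne') (ε := 1 / 3) (by norm_num)
  have hpush (x) : pushOut c ε (f x) ∈ range f \ ball c ε ∪ sphere c ε := by
    rcases le_total ε (dist (f x) c) with h | h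
    · exact .inl (by rw [pushOut_of_le_dist h]; exact ⟨mem_range_self x, h.not_gt⟩)
    · exact .inr (pushOut_mem_sphere (hfc x) h)
  have hmove (x) : dist (G (f x)) (G (pushOut c ε (f x))) ≤ 2 / 3 := by
    rcases le_total ε (dist (f x) c) with h | h
    · rw [pushOut_of_le_dist h, dist_self]
      norm_num
    · linarith [dist_le_norm_add_norm (G (f x)) (G (pushOut c ε (f x))), hsmall (f x) h,
        hsmall _ (sphere_subset_closedBall (pushOut_mem_sphere (hfc x) h))]
  have hclose (x : closedBall (0 : E) 1) : ‖(x : E) - P (pushOut c ε (f x))‖ ≤ 1 := by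
    rw [← hGf x, ← dist_eq_norm]
    linarith [dist_triangle_right (G (f x)) (P (pushOut c ε (f x))) (G (pushOut c ε (f x))),
      hmove x, hPG (pushOut c ε (f x))]
  obtain ⟨x, hx⟩ := exists_eq_zero_of_norm_sub_le_one
    (hP.comp (continuousOn_pushOut.comp_continuous hf hfc)) hclose
  exact hP0 _ (hpush x) hx

lemma range_mem_nhds_of_continuous_injective {f : closedBall (0 : E) 1 → E} (hf : Continuous f)
    (hinj : Function.Injective f) : range f ∈ 𝓝 (f ⟨0, mem_closedBall_self zero_le_one⟩) := by
  have := isCompact_iff_compactSpace.1 (isCompact_closedBall (0 : E) 1)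
  obtain ⟨G, hG⟩ := ContinuousMap.exists_extension' (Y := E) (hf.isClosedEmbedding hinj)
    ⟨Subtype.val, continuous_subtype_val⟩
  have hGf (x) : G (f x) = x := congrFun hG x
  have hG0 : ∀ᶠ y in 𝓝 (f ⟨0, mem_closedBall_self zero_le_one⟩), ‖G y‖ < 1 / 3 :=
    G.continuous.norm.continuousAt.eventually_lt continuousAt_const (by simp [hGf])
  obtain ⟨ρ, hρ, hsmall⟩ := eventually_nhds_iff_ball.1 hG0
  filter_upwards [ball_mem_nhds _ (half_pos hρ)] with c hc
  refine mem_range_of_continuous_leftInverse hf G.continuous hGf (ε := ρ / 2) (mem_ball'.1 hc)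
    fun y hy ↦ (hsmall y ?_).le
  exact closedBall_subset_ball' (by linarith [mem_ball.1 hc]) hy

end EuclideanBall

variable {E : Type*} [NormedAddCommGroup E] [NormedSpace ℝ E] [FiniteDimensional ℝ E] {U : Set E}

theorem isOpenMap_of_continuous_injective (hU : IsOpen U) {f : U → E} (hf : Continuous f)
    (hinj : Function.Injective f) : IsOpenMap f := by
  refine isOpenMap_iff_nhds_le.2 fun x s hs ↦ ?_
  let e : E ≃L[ℝ] EuclideanSpace ℝ (Fin (finrank ℝ E)) := toEuclidean
  have hs' : Subtype.val '' (f ⁻¹' s) ∈ 𝓝 ((x : E) + e.symm 0) := by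
    rw [map_zero, add_zero]
    exact hU.isOpenEmbedding_subtypeVal.image_mem_nhds.2 hs
  obtain ⟨R, hR, hRs⟩ := nhds_basis_closedBall.mem_iff.1
    ((continuous_const.add e.symm.continuous).continuousAt.preimage_mem_nhds hs')
  have hball (z : closedBall (0 : EuclideanSpace ℝ (Fin (finrank ℝ E))) 1) :
      (x : E) + e.symm (R • z) ∈ Subtype.val '' (f ⁻¹' s) :=
    hRs <| by
      rw [mem_closedBall_zero_iff, norm_smul, Real.norm_of_nonneg hR.le]
      exact mul_le_of_le_one_right hR.le (mem_closedBall_zero_iff.1 z.2)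
  let φ (z : closedBall (0 : EuclideanSpace ℝ (Fin (finrank ℝ E))) 1) : U :=
    ⟨x + e.symm (R • z), Subtype.coe_image_subset _ _ (hball z)⟩
  have hφ : Continuous φ := by fun_prop
  have hφinj : Function.Injective φ := fun z w hzw ↦ by
    simpa [φ, hR.ne', Subtype.ext_iff] using hzw
  have hrange := range_mem_nhds_of_continuous_injective (e.continuous.comp (hf.comp hφ))
    (e.injective.comp (hinj.comp hφinj))
  have hφ0 : φ ⟨0, mem_closedBall_self zero_le_one⟩ = x := by simp [φ]
  simp only [Function.comp_apply, hφ0] at hrange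
  filter_upwards [e.continuous.continuousAt.preimage_mem_nhds hrange]
  rintro y ⟨z, hz⟩
  obtain ⟨u, hus, hu⟩ := hball z
  rw [← e.injective hz]
  obtain rfl : u = φ z := Subtype.ext hu
  exact hus

theorem isOpen_range_of_continuous_injective {X : Type*} [TopologicalSpace X] (hU : IsOpen U)
    {i : U → X} (hi : Continuous i) (hiinj : Function.Injective i) {f : X → E} (hf : Continuous f)
    (hfinj : Function.Injective f) : IsOpen (range i) := by
  have hopen : IsOpen (range (f ∘ i)) :=
    (isOpenMap_of_continuous_injective hU (hf.comp hi) (hfinj.comp hiinj)).isOpen_range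
  rw [← hfinj.preimage_image (range i), ← range_comp]
  exact hopen.preimage hf

end InvarianceOfDomain

section Tripod

/-- The broken line through the origin running along the ray of `b` for negative parameters and
along the ray of `a` for positive ones. For two cube roots of unity it parametrizes the union of
two legs of the tripod. -/
def brokenLine {F : Type*} [AddCommGroup F] [Module ℝ F] (a b : F) (s : ℝ) : F :=
  max s 0 • a + max (-s) 0 • b

section Module

variable {F : Type*} [AddCommGroup F] [Module ℝ F] {a b : F} {s : ℝ}

lemma brokenLine_of_nonneg (hs : 0 ≤ s) : brokenLine a b s = s • a := by
  simp [brokenLine, hs]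

lemma brokenLine_of_nonpos (hs : s ≤ 0) : brokenLine a b s = -s • b := by
  simp [brokenLine, hs]

lemma brokenLine_sub_brokenLine_neg (a b : F) (s : ℝ) :
    brokenLine a b s - brokenLine a b (-s) = s • (a - b) := by
  conv_rhs => rw [← max_zero_sub_max_neg_zero_eq_self s]
  simp only [brokenLine, neg_neg]
  module

end Module

section Normed

variable {F : Type*} [NormedAddCommGroup F] [NormedSpace ℝ F] {a b c : F}

lemma continuous_brokenLine : Continuous (brokenLine a b) := by
  unfold brokenLine
  fun_prop

lemma norm_brokenLine (ha : ‖a‖ = 1) (hb : ‖b‖ = 1) (s : ℝ) : ‖brokenLine a b s‖ = |s| := by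
  rcases le_total 0 s with hs | hs
  · simp [brokenLine_of_nonneg hs, norm_smul, ha]
  · simp [brokenLine_of_nonpos hs, norm_smul, hb]

lemma injective_brokenLine (ha : ‖a‖ = 1) (hb : ‖b‖ = 1) (hab : a ≠ b) :
    Function.Injective (brokenLine a b) := by
  intro s t hst
  have habs : |s| = |t| := by rw [← norm_brokenLine ha hb s, hst, norm_brokenLine ha hb t]
  rcases abs_eq_abs.1 habs with h | rfl
  · exact h
  · have ht : t = 0 := by
      have h := brokenLine_sub_brokenLine_neg a b t
      rw [hst, sub_self, eq_comm, smul_eq_zero] at h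
      exact h.resolve_right (sub_ne_zero.2 hab)
    rw [ht, neg_zero]

lemma smul_notMem_range_brokenLine (ha : ‖a‖ = 1) (hb : ‖b‖ = 1) (hc : ‖c‖ = 1) (hca : c ≠ a)
    (hcb : c ≠ b) {t : ℝ} (ht : 0 < t) : t • c ∉ range (brokenLine a b) := by
  rintro ⟨s, hs⟩
  have habs : |s| = t := by
    rw [← norm_brokenLine ha hb, hs, norm_smul, hc, mul_one, Real.norm_of_nonneg ht.le]
  rcases le_total 0 s with hs0 | hs0
  · rw [brokenLine_of_nonneg hs0, ← abs_of_nonneg hs0, habs] at hs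
    exact hca (smul_right_injective F ht.ne' hs).symm
  · rw [brokenLine_of_nonpos hs0, ← abs_of_nonpos hs0, habs] at hs
    exact hcb (smul_right_injective F ht.ne' hs).symm

end Normed

lemma brokenLine_mem_tripod {ζ η : ℂ} (hζ : ζ ^ 3 = 1) (hη : η ^ 3 = 1) {s : ℝ}
    (hs : s ∈ Icc (-1) 1) : brokenLine ζ η s ∈ tripod := by
  rcases le_total 0 s with hs0 | hs0
  · exact ⟨s, ⟨hs0, hs.2⟩, ζ, hζ, brokenLine_of_nonneg hs0⟩
  · exact ⟨-s, ⟨neg_nonneg.2 hs0, neg_le.1 hs.1⟩, η, hη, brokenLine_of_nonpos hs0⟩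

lemma exists_distinct_cube_roots_of_unity : ∃ a b c : ℂ, (a ^ 3 = 1 ∧ b ^ 3 = 1 ∧ c ^ 3 = 1) ∧
    a ≠ b ∧ c ≠ a ∧ c ≠ b := by
  let ω := Complex.exp (2 * Real.pi * Complex.I / 3)
  have hω : IsPrimitiveRoot ω 3 := Complex.isPrimitiveRoot_exp 3 three_ne_zero
  refine ⟨1, ω, ω ^ 2, ⟨one_pow 3, hω.pow_eq_one, ?_⟩, (hω.ne_one (by norm_num)).symm,
    hω.pow_ne_one_of_pos_of_lt two_ne_zero (by norm_num), ?_⟩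
  · rw [pow_right_comm, hω.pow_eq_one, one_pow]
  · rw [Ne, sq, mul_eq_left₀ (hω.ne_zero three_ne_zero)]
    exact hω.ne_one (by norm_num)

variable {V : Type*} [NormedAddCommGroup V] [NormedSpace ℝ V] [FiniteDimensional ℝ V]

lemma not_injective_of_continuous_tripod_prod_closedBall
    {f : tripod × closedBall (0 : V) 1 → ℝ × V} (hf : Continuous f) : ¬ Function.Injective f := by
  intro hinj
  obtain ⟨a, b, c, ⟨ha, hb, hc⟩, hab, hca, hcb⟩ := exists_distinct_cube_roots_of_unity
  have norm_eq {ζ : ℂ} (hζ : ζ ^ 3 = 1) : ‖ζ‖ = 1 :=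
    Complex.norm_eq_one_of_pow_eq_one hζ three_ne_zero
  let O : closedBall (0 : V) 1 := ⟨0, mem_closedBall_self zero_le_one⟩
  let i (p : (Ioo (-1 : ℝ) 1 ×ˢ ball (0 : V) 1 : Set (ℝ × V))) : tripod × closedBall (0 : V) 1 :=
    (⟨brokenLine a b p.1.1, brokenLine_mem_tripod ha hb (Ioo_subset_Icc_self p.2.1)⟩,
      ⟨p.1.2, ball_subset_closedBall p.2.2⟩)
  have hi : Continuous i := by
    have := continuous_brokenLine (a := a) (b := b)
    fun_prop
  have hiinj : Function.Injective i := fun p q hpq ↦ Subtype.ext <| Prod.ext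
    (injective_brokenLine (norm_eq ha) (norm_eq hb) hab congr(($hpq).1.1)) congr(($hpq).2.1)
  have hopen : IsOpen (range i) := isOpen_range_of_continuous_injective
    (isOpen_Ioo.prod isOpen_ball) hi hiinj hf hinj
  let leg (t : unitInterval) : tripod × closedBall (0 : V) 1 :=
    (⟨(t : ℝ) • c, t, t.2, c, hc, rfl⟩, O)
  have hleg : leg ⁻¹' range i = {0} := by
    refine Subset.antisymm (fun t ⟨p, hp⟩ ↦ ?_) (singleton_subset_iff.2 ?_)
    · by_contra ht
      exact smul_notMem_range_brokenLine (norm_eq ha) (norm_eq hb) (norm_eq hc) hca hcb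
        (unitInterval.pos_iff_ne_zero.2 ht) ⟨p.1.1, congr(($hp).1.1)⟩
    · refine ⟨⟨0, by simp⟩, ?_⟩
      ext <;> simp [i, leg, O, brokenLine]
  have hleg_cont : Continuous leg := by fun_prop
  exact not_isOpen_singleton (0 : unitInterval) (hleg ▸ hopen.preimage hleg_cont)

theorem no_injective_tripod_map_into_euclidean_general {W : Type*} [NormedAddCommGroup W]
    [NormedSpace ℝ W] [FiniteDimensional ℝ W] (hVW : finrank ℝ W ≤ finrank ℝ V + 1) :
    ¬ ∃ f : tripod × closedBall (0 : V) 1 → W, Continuous f ∧ Function.Injective f := by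
  rintro ⟨f, hf, hinj⟩
  obtain ⟨j, hj⟩ : ∃ j : W →ₗ[ℝ] ℝ × V, Function.Injective j :=
    finrank_le_iff_exists_linearMap.1 (by rwa [finrank_prod, finrank_self, add_comm])
  exact not_injective_of_continuous_tripod_prod_closedBall
    (j.continuous_of_finiteDimensional.comp hf) (hj.comp hinj)

end Tripod

/-- Euclidean `(m+1)`-space contains no `(m+1)`-branching point: there is no continuous
injective map from `T × Dᵐ` (the `(m+1)`-dimensional tripod) into
`EuclideanSpace ℝ (Fin (m+1))`. -/
theorem no_injective_tripod_map_into_euclidean (m : ℕ) :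
    ¬ ∃ f : tripod × Metric.closedBall (0 : EuclideanSpace ℝ (Fin m)) 1 →
        EuclideanSpace ℝ (Fin (m + 1)),
      Continuous f ∧ Function.Injective f :=
  no_injective_tripod_map_into_euclidean_general (by simp)
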